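/- Let (α;β) and (α';β') be upper-left weak bicompositions. Then every bicomposition occurring in the quasi-shuffle product (α;β)*(α';β'), taken over the monoid ℕ×ℕ with componentwise addition and viewing a bicomposition as the list of its columns, is again upper-left weak, and M̂_{(α;β)} · M̂_{(α';β')} = M̂_{(α;β)*(α';β')} in ℚ[[X]], where M̂ is extended ℚ-linearly to linear combinations of upper-left weak bicompositions. In particular, the ℚ-linear span of the Stirling left weak quasisymmetric functions is a subalgebra of ℚ[[X]]. -/

import Mathlib

open Finset

/-- quasi-shuffle product on the free ℚ-module on lists over an additive commutative monoid -/
noncomputable def qsh {A : Type} [AddCommMonoid A] : List A → List A → (List A →₀ ℚ)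
  | [], b => Finsupp.single b 1
  | a :: a', [] => Finsupp.single (a :: a') 1
  | a :: a', b :: b' =>
      (qsh a' (b :: b')).mapDomain (a :: ·) +
      (qsh (a :: a') b').mapDomain (b :: ·) +
      (qsh a' b').mapDomain ((a + b) :: ·)
termination_by a b => a.length + b.length

/-- an upper-left weak bicomposition (a list of columns whose first-row list is left weak) -/
def UpperLeftWeak (c : List (ℕ × ℕ)) : Prop := ∀ p : ℕ × ℕ, c.getLast? = some p → 0 < p.1

/-- the Stirling left weak quasisymmetric function M̂_{(α;β)} of a bicomposition (list of
columns): its coefficient at a monomial μ is the (finite, for upper-left weak bicompositions)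
sum of I^β over all strictly increasing tuples I with x_I^α = μ. -/
noncomputable def stirM (c : List (ℕ × ℕ)) : MvPowerSeries ℕ+ ℚ :=
  fun μ => ∑ᶠ I ∈ {I : Fin c.length → ℕ+ | StrictMono I ∧
      (∑ j, Finsupp.single (I j) (c.get j).1) = μ},
    ∏ j, (((I j : ℕ) : ℚ) ^ (c.get j).2)

/-!
Restrict the variables to a finite set `s` and sum the products of column weights `w i a` over the
strictly increasing tuples with values in `s`. Adjoining a new least element `i` to `s` gives
`S' (a :: c) = w i a * S c + S (a :: c)` for the sums `S`, `S'` before and after. Multiplying two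
such recursions produces exactly the three terms of the quasi-shuffle recursion, because
`w i a * w i b = w i (a + b)`. This proves the product formula for the truncated sums.

The last exponent of a left weak bicomposition is positive, so the largest variable index of a tuple
lies in the support of its monomial. Hence each coefficient of `stirM c` is already visible in a
large enough truncation, and the product formula passes to power series.
-/

lemma exists_of_mem_support_qsh_cons_cons {A : Type} [AddCommMonoid A] {a b : A}
    {c c' d : List A} (hd : d ∈ (qsh (a :: c) (b :: c')).support) :
    (∃ e ∈ (qsh c (b :: c')).support, a :: e = d) ∨
      (∃ e ∈ (qsh (a :: c) c').support, b :: e = d) ∨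
      ∃ e ∈ (qsh c c').support, (a + b) :: e = d := by
  classical
  have exists_of_mem_mapDomain {x : A} {f : List A →₀ ℚ} (h : d ∈ (f.mapDomain (x :: ·)).support) :
      ∃ e ∈ f.support, x :: e = d :=
    mem_image.1 (Finsupp.mapDomain_support h)
  rw [qsh] at hd
  rcases mem_union.1 (Finsupp.support_add hd) with hd | hd
  · rcases mem_union.1 (Finsupp.support_add hd) with hd | hd
    · exact .inl (exists_of_mem_mapDomain hd)
    · exact .inr (.inl (exists_of_mem_mapDomain hd))
  · exact .inr (.inr (exists_of_mem_mapDomain hd))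

lemma eq_nil_of_nil_mem_support_qsh {A : Type} [AddCommMonoid A] {c c' : List A}
    (h : [] ∈ (qsh c c').support) : c = [] ∧ c' = [] := by
  match c, c' with
  | [], b => simpa [qsh, Finsupp.single_apply, eq_comm] using h
  | a :: c, [] => simp [qsh] at h
  | a :: c, b :: c' => simpa using exists_of_mem_support_qsh_cons_cons h

lemma forall_getLast?_cons_iff {A : Type*} {P : A → Prop} {x : A} {l : List A} :
    (∀ a ∈ (x :: l).getLast?, P a) ↔ (l = [] → P x) ∧ ∀ a ∈ l.getLast?, P a := by
  cases l <;> simp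

lemma forall_getLast?_of_mem_support_qsh {A : Type} [AddCommMonoid A] {P : A → Prop}
    (hP : ∀ a b, P a → P b → P (a + b)) {c c' d : List A} (hc : ∀ a ∈ c.getLast?, P a)
    (hc' : ∀ a ∈ c'.getLast?, P a) (hd : d ∈ (qsh c c').support) : ∀ a ∈ d.getLast?, P a := by
  induction d generalizing c c' with
  | nil => simp
  | cons x d ih =>
    match c, c' with
    | [], b => simp_all [qsh]
    | a :: c, [] => simp_all [qsh]
    | a :: c, b :: c' =>
      have hc_cons := forall_getLast?_cons_iff.1 hc
      have hc'_cons := forall_getLast?_cons_iff.1 hc'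
      rw [forall_getLast?_cons_iff]
      rcases exists_of_mem_support_qsh_cons_cons hd with
        ⟨e, he, h⟩ | ⟨e, he, h⟩ | ⟨e, he, h⟩ <;> obtain ⟨rfl, rfl⟩ := List.cons.inj h <;>
        have nil_of_nil (h : e = []) := eq_nil_of_nil_mem_support_qsh (h ▸ he)
      · exact ⟨fun h => absurd (nil_of_nil h).2 (List.cons_ne_nil _ _), ih hc_cons.2 hc' he⟩
      · exact ⟨fun h => absurd (nil_of_nil h).1 (List.cons_ne_nil _ _), ih hc hc'_cons.2 he⟩
      · exact ⟨fun h => hP a b (hc_cons.1 (nil_of_nil h).1) (hc'_cons.1 (nil_of_nil h).2),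
          ih hc_cons.2 hc'_cons.2 he⟩

/-- The strictly increasing `k`-tuples with values in `s`: the index set of a truncated monomial
quasisymmetric sum. -/
noncomputable def strictMonoTuples {ι : Type*} [Preorder ι] (s : Finset ι) (k : ℕ) :
    Finset (Fin k → ι) :=
  open Classical in {I ∈ Fintype.piFinset fun _ => s | StrictMono I}

section StrictMonoTuples

variable {ι : Type*} [Preorder ι]

lemma mem_strictMonoTuples {s : Finset ι} {k : ℕ} {I : Fin k → ι} :
    I ∈ strictMonoTuples s k ↔ (∀ j, I j ∈ s) ∧ StrictMono I := by
  simp [strictMonoTuples]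

lemma cons_mem_strictMonoTuples [DecidableLT ι] {s : Finset ι} {k : ℕ} {i : ι} {J : Fin k → ι} :
    (Fin.cons i J : Fin (k + 1) → ι) ∈ strictMonoTuples s (k + 1) ↔
      i ∈ s ∧ J ∈ strictMonoTuples {j ∈ s | i < j} k := by
  simp only [mem_strictMonoTuples, Fin.forall_fin_succ, Fin.cons_zero, Fin.cons_succ,
    Fin.strictMono_cons, mem_filter, forall_and]
  tauto

lemma sum_strictMonoTuples_succ [DecidableLT ι] {M : Type*} [AddCommMonoid M] (s : Finset ι)
    (k : ℕ) (f : (Fin (k + 1) → ι) → M) :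
    ∑ I ∈ strictMonoTuples s (k + 1), f I =
      ∑ i ∈ s, ∑ J ∈ strictMonoTuples {j ∈ s | i < j} k, f (Fin.cons i J) := by
  rw [sum_sigma']
  refine sum_nbij' (fun I => ⟨I 0, Fin.tail I⟩) (fun p => Fin.cons p.1 p.2) ?_ ?_ ?_ ?_ ?_
  · intro I hI
    rwa [mem_sigma, ← cons_mem_strictMonoTuples, Fin.cons_self_tail]
  · rintro ⟨i, J⟩ h
    exact cons_mem_strictMonoTuples.2 (mem_sigma.1 h)
  all_goals simp

end StrictMonoTuples

/-- The sum of `w (I 0) c₀ * w (I 1) c₁ * ⋯` over the strictly increasing tuples `I` with values in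
`s`. With `w = columnMonomial` it is the truncation of `stirM c` to the variables in `s`. -/
noncomputable def nestedSum {ι A R : Type*} [Preorder ι] [CommSemiring R] (w : ι → A → R)
    (s : Finset ι) (c : List A) : R :=
  ∑ I ∈ strictMonoTuples s c.length, ∏ j, w (I j) (c.get j)

section NestedSum

variable {ι A R : Type*} [CommSemiring R] (w : ι → A → R)

lemma nestedSum_nil [Preorder ι] (s : Finset ι) : nestedSum w s [] = 1 := by
  have univ_tuples : strictMonoTuples s 0 = univ :=
    eq_univ_of_forall fun I => mem_strictMonoTuples.2 ⟨fun j => j.elim0, Subsingleton.strictMono I⟩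
  simp [nestedSum, univ_tuples]

lemma nestedSum_cons [Preorder ι] [DecidableLT ι] (s : Finset ι) (a : A) (c : List A) :
    nestedSum w s (a :: c) = ∑ i ∈ s, w i a * nestedSum w {j ∈ s | i < j} c := by
  simp only [nestedSum, mul_sum]
  refine (sum_strictMonoTuples_succ s c.length _).trans ?_
  simp [Fin.prod_univ_succ]

lemma nestedSum_insert_cons [LinearOrder ι] {i : ι} {s : Finset ι} (hi : ∀ j ∈ s, i < j) (a : A)
    (c : List A) :
    nestedSum w (insert i s) (a :: c) = w i a * nestedSum w s c + nestedSum w s (a :: c) := by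
  have filter_min : {j ∈ insert i s | i < j} = s := by
    rw [filter_insert, if_neg (lt_irrefl i), filter_true_of_mem hi]
  have filter_mem (k : ι) (hk : k ∈ s) : {j ∈ insert i s | k < j} = {j ∈ s | k < j} := by
    rw [filter_insert, if_neg (hi k hk).asymm]
  rw [nestedSum_cons, sum_insert fun h => (hi i h).false, filter_min, nestedSum_cons]
  congr 1
  exact sum_congr rfl fun k hk => by rw [filter_mem k hk]

end NestedSum

section QuasiShuffle

variable {ι R : Type*} {A : Type} [LinearOrder ι] [CommSemiring R] [Algebra ℚ R]

lemma linearCombination_nestedSum_empty_cons (w : ι → A → R) (a : A) (x : List A →₀ ℚ) :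
    Finsupp.linearCombination ℚ (nestedSum w ∅) (x.mapDomain (a :: ·)) = 0 := by
  rw [Finsupp.linearCombination_mapDomain]
  simp [Finsupp.linearCombination_apply, nestedSum_cons]

lemma linearCombination_nestedSum_insert_cons (w : ι → A → R) {i : ι} {s : Finset ι}
    (hi : ∀ j ∈ s, i < j) (a : A) (x : List A →₀ ℚ) :
    Finsupp.linearCombination ℚ (nestedSum w (insert i s)) (x.mapDomain (a :: ·)) =
      w i a * Finsupp.linearCombination ℚ (nestedSum w s) x +
        Finsupp.linearCombination ℚ (nestedSum w s) (x.mapDomain (a :: ·)) := by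
  rw [Finsupp.linearCombination_mapDomain, Finsupp.linearCombination_mapDomain]
  simp only [Finsupp.linearCombination_apply, Finsupp.sum, Function.comp_apply,
    nestedSum_insert_cons w hi, smul_add, sum_add_distrib, mul_sum, mul_smul_comm]

theorem nestedSum_mul_nestedSum [AddCommMonoid A] {w : ι → A → R}
    (hw : ∀ i a b, w i (a + b) = w i a * w i b) (s : Finset ι) (c c' : List A) :
    nestedSum w s c * nestedSum w s c' =
      Finsupp.linearCombination ℚ (nestedSum w s) (qsh c c') := by
  induction s using induction_on_min generalizing c c' with
  | empty =>
    match c, c' with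
    | [], c' => simp [qsh, nestedSum_nil]
    | a :: c, [] => simp [qsh, nestedSum_nil]
    | a :: c, b :: c' =>
      simp only [qsh, map_add, linearCombination_nestedSum_empty_cons]
      simp [nestedSum_cons]
  | insert i s hi ih =>
    match c, c' with
    | [], c' => simp [qsh, nestedSum_nil]
    | a :: c, [] => simp [qsh, nestedSum_nil]
    | a :: c, b :: c' =>
      rw [nestedSum_insert_cons w hi, nestedSum_insert_cons w hi]
      calc (w i a * nestedSum w s c + nestedSum w s (a :: c)) *
            (w i b * nestedSum w s c' + nestedSum w s (b :: c'))
        _ = w i a * (nestedSum w s c * nestedSum w s (b :: c')) +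
              w i b * (nestedSum w s (a :: c) * nestedSum w s c') +
              w i a * w i b * (nestedSum w s c * nestedSum w s c') +
              nestedSum w s (a :: c) * nestedSum w s (b :: c') := by ring
        _ = Finsupp.linearCombination ℚ (nestedSum w (insert i s)) (qsh (a :: c) (b :: c')) := by
          simp only [ih, qsh, map_add, linearCombination_nestedSum_insert_cons w hi, hw]
          ring

end QuasiShuffle

/-- The monomial `i ^ β * x_i ^ α` contributed by a column `(α, β)` placed at the variable `x_i`. -/
noncomputable def columnMonomial (i : ℕ+) (a : ℕ × ℕ) : MvPowerSeries ℕ+ ℚ :=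
  MvPowerSeries.monomial (Finsupp.single i a.1) ((i : ℚ) ^ a.2)

lemma columnMonomial_add (i : ℕ+) (a b : ℕ × ℕ) :
    columnMonomial i (a + b) = columnMonomial i a * columnMonomial i b := by
  simp [columnMonomial, MvPowerSeries.monomial_mul_monomial, Finsupp.single_add, pow_add]

lemma UpperLeftWeak.of_mem_support_qsh {c c' d : List (ℕ × ℕ)} (hc : UpperLeftWeak c)
    (hc' : UpperLeftWeak c') (hd : d ∈ (qsh c c').support) : UpperLeftWeak d :=
  forall_getLast?_of_mem_support_qsh (P := fun p : ℕ × ℕ => 0 < p.1)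
    (fun _ b ha _ => Nat.add_pos_left ha b.1) hc hc' hd

lemma UpperLeftWeak.exists_mem_support_le {ι : Type*} [Preorder ι] {c : List (ℕ × ℕ)}
    (hc : UpperLeftWeak c) {I : Fin c.length → ι} (hI : Monotone I) (j : Fin c.length) :
    ∃ i ∈ (∑ j, Finsupp.single (I j) (c.get j).1).support, I j ≤ i := by
  have hlt : c.length - 1 < c.length := Nat.sub_lt j.pos one_pos
  let last : Fin c.length := ⟨c.length - 1, hlt⟩
  have last_pos : 0 < (c.get last).1 :=
    hc _ (by rw [List.getLast?_eq_getElem?, List.getElem?_eq_getElem hlt]; rfl)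
  refine ⟨I last, ?_, hI (Fin.le_def.2 (Nat.le_sub_one_of_lt j.isLt))⟩
  have single_le : Finsupp.single (I last) (c.get last).1 ≤
      ∑ j, Finsupp.single (I j) (c.get j).1 :=
    single_le_sum (f := fun j => Finsupp.single (I j) (c.get j).1)
      (fun _ _ => zero_le) (mem_univ last)
  exact Finsupp.support_mono single_le (by simpa using last_pos.ne')

lemma coeff_stirM_eq_coeff_nestedSum {c : List (ℕ × ℕ)} (hc : UpperLeftWeak c) {s : Finset ℕ+}
    (hs : IsLowerSet (s : Set ℕ+)) {μ : ℕ+ →₀ ℕ} (hμ : μ.support ⊆ s) :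
    MvPowerSeries.coeff μ (stirM c) = MvPowerSeries.coeff μ (nestedSum columnMonomial s c) := by
  classical
  have coeff_nestedSum : MvPowerSeries.coeff μ (nestedSum columnMonomial s c) =
      ∑ I ∈ strictMonoTuples s c.length with μ = ∑ j, Finsupp.single (I j) (c.get j).1,
        ∏ j, (I j : ℚ) ^ (c.get j).2 := by
    simp only [nestedSum, columnMonomial, MvPowerSeries.prod_monomial, map_sum,
      MvPowerSeries.coeff_monomial, sum_filter]
  rw [coeff_nestedSum, ← finsum_mem_coe_finset]
  refine finsum_mem_congr (Set.ext fun I => ?_) fun _ _ => rfl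
  simp only [coe_filter, Set.mem_ofPred_eq, mem_strictMonoTuples, eq_comm (a := μ)]
  refine and_congr_left fun hI => (and_iff_right_of_imp fun I_mono j => ?_).symm
  obtain ⟨i, hi, hji⟩ := hc.exists_mem_support_le I_mono.monotone j
  exact hs hji (hμ (hI ▸ hi))

theorem stirM_mul_stirM {c c' : List (ℕ × ℕ)} (hc : UpperLeftWeak c) (hc' : UpperLeftWeak c') :
    stirM c * stirM c' = (qsh c c').sum fun d q => q • stirM d := by
  ext μ
  obtain ⟨N, hN⟩ := μ.support.exists_le
  have coeff_stirM {d : List (ℕ × ℕ)} (hd : UpperLeftWeak d) {ν : ℕ+ →₀ ℕ} (hν : ν ≤ μ) :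
      MvPowerSeries.coeff ν (stirM d) =
        MvPowerSeries.coeff ν (nestedSum columnMonomial (Iic N) d) := by
    refine coeff_stirM_eq_coeff_nestedSum hd ?_ fun i hi => ?_
    · simpa using isLowerSet_Iic N
    · exact mem_Iic.2 (hN i (Finsupp.support_mono hν hi))
  calc
    MvPowerSeries.coeff μ (stirM c * stirM c')
      = MvPowerSeries.coeff μ
          (nestedSum columnMonomial (Iic N) c * nestedSum columnMonomial (Iic N) c') := by
        rw [MvPowerSeries.coeff_mul, MvPowerSeries.coeff_mul]
        refine sum_congr rfl fun p hp => ?_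
        have hp : p.1 + p.2 = μ := HasAntidiagonal.mem_antidiagonal.1 hp
        rw [coeff_stirM hc (hp ▸ le_self_add), coeff_stirM hc' (hp ▸ le_add_self)]
    _ = MvPowerSeries.coeff μ
          ((qsh c c').sum fun d q => q • nestedSum columnMonomial (Iic N) d) := by
        rw [nestedSum_mul_nestedSum columnMonomial_add, Finsupp.linearCombination_apply]
    _ = MvPowerSeries.coeff μ ((qsh c c').sum fun d q => q • stirM d) := by
        simp only [Finsupp.sum, map_sum, MvPowerSeries.coeff_smul]
        refine sum_congr rfl fun d hd => ?_
        rw [coeff_stirM (hc.of_mem_support_qsh hc' hd) le_rfl]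

theorem stirM_mul_stirM_mem_span {c c' : List (ℕ × ℕ)} (hc : UpperLeftWeak c)
    (hc' : UpperLeftWeak c') :
    stirM c * stirM c' ∈
      Submodule.span ℚ {F : MvPowerSeries ℕ+ ℚ | ∃ d, UpperLeftWeak d ∧ F = stirM d} := by
  rw [stirM_mul_stirM hc hc']
  exact Submodule.sum_mem _ fun d hd => Submodule.smul_mem _ _ <|
    Submodule.subset_span ⟨d, hc.of_mem_support_qsh hc' hd, rfl⟩

/-- For upper-left weak bicompositions (α;β), (α';β'), every bicomposition
occurring in the quasi-shuffle product (α;β)*(α';β') over the monoid ℕ×ℕ is again upper-left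
weak, and M̂_{(α;β)} · M̂_{(α';β')} = M̂_{(α;β)*(α';β')} in ℚ[[X]], where M̂ is extended
ℚ-linearly. In particular the ℚ-linear span of the Stirling left weak quasisymmetric
functions is closed under multiplication, hence a subalgebra of ℚ[[X]]. -/
theorem stmt3 (c c' : List (ℕ × ℕ))
    (hc : UpperLeftWeak c) (hc' : UpperLeftWeak c') :
    ((∀ d ∈ (qsh c c').support, UpperLeftWeak d) ∧
      stirM c * stirM c' = (qsh c c').sum fun d q => q • stirM d) ∧
    (∀ f g : MvPowerSeries ℕ+ ℚ,
      f ∈ Submodule.span ℚ {F : MvPowerSeries ℕ+ ℚ | ∃ d, UpperLeftWeak d ∧ F = stirM d} →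
      g ∈ Submodule.span ℚ {F : MvPowerSeries ℕ+ ℚ | ∃ d, UpperLeftWeak d ∧ F = stirM d} →
      f * g ∈ Submodule.span ℚ {F : MvPowerSeries ℕ+ ℚ | ∃ d, UpperLeftWeak d ∧ F = stirM d}) := by
  refine ⟨⟨fun d => hc.of_mem_support_qsh hc', stirM_mul_stirM hc hc'⟩, fun f g hf hg => ?_⟩
  have hfg := Submodule.mul_mem_mul hf hg
  rw [Submodule.span_mul_span] at hfg
  refine Submodule.span_le.2 ?_ hfg
  rintro _ ⟨_, ⟨d, hd, rfl⟩, _, ⟨e, he, rfl⟩, rfl⟩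
  exact stirM_mul_stirM_mem_span hd he
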